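/- arXiv:1508.03507 — 8 statements merged into one kernel-verified Lean document; each statement's English description precedes it below -/
import Mathlib

section
/- Let a, b, c be real numbers with 0 < a < 1, 0 < b < 1, c > 0, and a·c < 1. Then the double series ∑_{X≥1} ∑_{Y≥1} a^X · b^Y · c^{min(X,2Y)} converges and equals a·b·c·(1 − a + a·c − a²·b·c) / ((1 − a)·(1 − b)·(1 − a²·b·c²)). -/
theorem hasSum_pnat_geometric {r : ℝ} (h₀ : 0 ≤ r) (h₁ : r < 1) :
    HasSum (fun n : ℕ+ => r ^ (n : ℕ)) (r / (1 - r)) := by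
  rw [hasSum_pnat_iff_hasSum_succ (f := fun n => r ^ n)]
  simpa only [pow_succ', div_eq_mul_inv] using (hasSum_geometric_of_lt_one h₀ h₁).mul_left r

theorem hasSum_pnat_pow_mul_pow_min {a c : ℝ} (ha0 : 0 ≤ a) (ha1 : a < 1) (hac : a * c ≠ 1)
    (N : ℕ) :
    HasSum (fun n : ℕ+ => a ^ (n : ℕ) * c ^ min (n : ℕ) N)
      (a * c / (1 - a * c) * (1 - (a * c) ^ N) + a / (1 - a) * (a * c) ^ N) := by
  rw [hasSum_pnat_iff_hasSum_succ (f := fun n => a ^ n * c ^ min n N), ← hasSum_nat_add_iff' N]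
  have head : ∑ n ∈ Finset.range N, a ^ (n + 1) * c ^ min (n + 1) N
      = a * c / (1 - a * c) * (1 - (a * c) ^ N) := by
    have : ∀ n ∈ Finset.range N, a ^ (n + 1) * c ^ min (n + 1) N = a * c * (a * c) ^ n := by
      intro n hn
      rw [min_eq_left (Finset.mem_range.mp hn), ← mul_pow, pow_succ']
    rw [Finset.sum_congr rfl this, ← Finset.mul_sum, geom_sum_eq hac, ← neg_div_neg_eq]
    ring
  rw [head, add_sub_cancel_left]
  convert (hasSum_geometric_of_lt_one ha0 ha1).mul_left (a * (a * c) ^ N) using 1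
  · rfl
  · funext n
    rw [min_eq_right (by omega)]
    ring
  · ring

/-- Lemma 2.3(2): ∑_{X,Y≥1} a^X b^Y c^{min(X,2Y)}
    = abc(1-a+ac-a²bc)/((1-a)(1-b)(1-a²bc²)). -/
theorem heisenberg_sum_min_X_2Y (a b c : ℝ) (ha0 : 0 < a) (ha1 : a < 1)
    (hb0 : 0 < b) (hb1 : b < 1) (hc : 0 < c) (hac : a * c < 1) :
    HasSum
      (fun p : ℕ+ × ℕ+ =>
        a ^ (p.1 : ℕ) * b ^ (p.2 : ℕ) * c ^ min (p.1 : ℕ) (2 * (p.2 : ℕ)))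
      (a * b * c * (1 - a + a * c - a ^ 2 * b * c) /
        ((1 - a) * (1 - b) * (1 - a ^ 2 * b * c ^ 2))) := by
  have hac0 : 0 < a * c := mul_pos ha0 hc
  have hq1 : b * (a * c) ^ 2 < 1 :=
    mul_lt_one_of_nonneg_of_lt_one_left hb0.le hb1 (pow_le_one₀ hac0.le hac.le)
  have inner (Y : ℕ+) : HasSum
      (fun X : ℕ+ => a ^ (X : ℕ) * b ^ (Y : ℕ) * c ^ min (X : ℕ) (2 * (Y : ℕ)))
      (a * c / (1 - a * c) * (b ^ (Y : ℕ) - (b * (a * c) ^ 2) ^ (Y : ℕ)) +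
        a / (1 - a) * (b * (a * c) ^ 2) ^ (Y : ℕ)) := by
    convert (hasSum_pnat_pow_mul_pow_min ha0.le ha1 hac.ne (2 * (Y : ℕ))).mul_left
      (b ^ (Y : ℕ)) using 1
    · rfl
    · funext X
      ring
    · rw [mul_pow b, ← pow_mul (a * c)]
      ring
  have hq := hasSum_pnat_geometric (r := b * (a * c) ^ 2) (by positivity) hq1
  have outer := (((hasSum_pnat_geometric hb0.le hb1).sub hq).mul_left (a * c / (1 - a * c))).add
    (hq.mul_left (a / (1 - a)))
  rw [← (Equiv.prodComm ℕ+ ℕ+).hasSum_iff]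
  have summable : Summable ((fun p : ℕ+ × ℕ+ =>
      a ^ (p.1 : ℕ) * b ^ (p.2 : ℕ) * c ^ min (p.1 : ℕ) (2 * (p.2 : ℕ))) ∘
        Equiv.prodComm ℕ+ ℕ+) := by
    refine (summable_prod_of_nonneg fun p => ?_).mpr ⟨fun Y => (inner Y).summable, ?_⟩
    · simp only [Function.comp_apply, Pi.zero_apply]
      positivity
    · exact outer.summable.congr fun Y => (inner Y).tsum_eq.symm
  convert summable.hasSum using 1
  rw [(summable.hasSum.prod_fiberwise inner).unique outer]
  have h₁ : 1 - a ≠ 0 := (sub_pos.mpr ha1).ne'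
  have h₂ : 1 - b ≠ 0 := (sub_pos.mpr hb1).ne'
  have h₃ : 1 - a * c ≠ 0 := (sub_pos.mpr hac).ne'
  have h₄ : 1 - a ^ 2 * b * c ^ 2 ≠ 0 := by
    have := (sub_pos.mpr hq1).ne'
    contrapose! this
    linear_combination this
  rw [show b * (a * c) ^ 2 = a ^ 2 * b * c ^ 2 by ring]
  field_simp
  ring
end

section
/- Let a, b, c be real numbers with 0 < a < 1, 0 < b < 1, c > 0, and a·c² < 1. Then the double series ∑_{X≥1} ∑_{Y≥1} a^X · b^Y · c^{min(X,Y) + min(X,2Y)} converges and equals a·b·c²·(1 − a + a·c − a·b·c − a²·b·c³ + a³·b²·c³) / ((1 − a)·(1 − b)·(1 − a·b·c²)·(1 − a²·b·c³)). -/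
/-- A product of two geometric series, scaled by `t` and transported along an injection whose
range supports `F`. -/
lemma hasSum_of_injective_of_geometric {α : Type*} {F : α → ℝ} {g : ℕ × ℕ → α} {r s t : ℝ}
    (hg : Function.Injective g) (hF : ∀ x, F x ≠ 0 → x ∈ Set.range g)
    (hFg : ∀ i j, F (g (i, j)) = r ^ i * s ^ j * t)
    (hr0 : 0 ≤ r) (hr1 : r < 1) (hs0 : 0 ≤ s) (hs1 : s < 1) :
    HasSum F ((1 - r)⁻¹ * (1 - s)⁻¹ * t) := by
  rw [← hg.hasSum_iff fun x hx => not_not.mp fun h => hx (hF x h)]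
  have hr := hasSum_geometric_of_lt_one hr0 hr1
  have hs := hasSum_geometric_of_lt_one hs0 hs1
  have hrs := hr.mul hs (hr.summable.mul_of_nonneg hs.summable
    (fun i => pow_nonneg hr0 i) (fun j => pow_nonneg hs0 j))
  have hcomp : F ∘ g = fun q => r ^ q.1 * s ^ q.2 * t := funext fun q => hFg q.1 q.2
  rw [hcomp]
  exact hrs.mul_right t

/-- Lemma 2.3(3): ∑_{X,Y≥1} a^X b^Y c^{min(X,Y)+min(X,2Y)}
    = abc²(1-a+ac-abc-a²bc³+a³b²c³)/((1-a)(1-b)(1-abc²)(1-a²bc³)). -/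
theorem heisenberg_sum_min_XY_plus_min_X_2Y (a b c : ℝ) (ha0 : 0 < a) (ha1 : a < 1)
    (hb0 : 0 < b) (hb1 : b < 1) (hc : 0 < c) (hac : a * c ^ 2 < 1) :
    HasSum
      (fun p : ℕ+ × ℕ+ =>
        a ^ (p.1 : ℕ) * b ^ (p.2 : ℕ) *
          c ^ (min (p.1 : ℕ) (p.2 : ℕ) + min (p.1 : ℕ) (2 * (p.2 : ℕ))))
      (a * b * c ^ 2 *
          (1 - a + a * c - a * b * c - a ^ 2 * b * c ^ 3 + a ^ 3 * b ^ 2 * c ^ 3) /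
        ((1 - a) * (1 - b) * (1 - a * b * c ^ 2) * (1 - a ^ 2 * b * c ^ 3))) := by
  have hac1 : a ^ 2 * c ^ 3 < 1 := by
    have h : (a ^ 2 * c ^ 3) ^ 2 < 1 := by
      calc (a ^ 2 * c ^ 3) ^ 2 = a * (a * c ^ 2) ^ 3 := by ring
        _ < 1 := mul_lt_one_of_nonneg_of_lt_one_left ha0.le ha1
          (pow_le_one₀ (by positivity) hac.le)
    exact lt_of_pow_lt_pow_left₀ 2 zero_le_one (by simpa using h)
  have hu : a * b * c ^ 2 < 1 := by nlinarith [mul_pos ha0 (pow_pos hc 2)]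
  have hv : a ^ 2 * b * c ^ 3 < 1 := by nlinarith [mul_pos (pow_pos ha0 2) (pow_pos hc 3)]
  have hu0 : 0 ≤ a * b * c ^ 2 := by positivity
  have hv0 : 0 ≤ a ^ 2 * b * c ^ 3 := by positivity
  set f : ℕ+ × ℕ+ → ℝ := fun p => a ^ (p.1 : ℕ) * b ^ (p.2 : ℕ) *
    c ^ (min (p.1 : ℕ) (p.2 : ℕ) + min (p.1 : ℕ) (2 * (p.2 : ℕ))) with hf
  have low : HasSum (fun p : ℕ+ × ℕ+ => if (p.1 : ℕ) ≤ p.2 then f p else 0)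
      ((1 - a * b * c ^ 2)⁻¹ * (1 - b)⁻¹ * (a * b * c ^ 2)) := by
    refine hasSum_of_injective_of_geometric
      (g := fun q => (Nat.succPNat q.1, Nat.succPNat (q.1 + q.2))) ?_ ?_ ?_ hu0 hu hb0.le hb1
    · rintro ⟨i, j⟩ ⟨k, l⟩ h
      simp only [Prod.mk.injEq, Nat.succPNat_inj] at h ⊢
      omega
    · rintro ⟨x, y⟩ h
      have hxy : (x : ℕ) ≤ y := not_not.mp fun hn => h (if_neg hn)
      have hx := x.pos
      refine ⟨(x - 1, y - x), Prod.ext (PNat.eq ?_) (PNat.eq ?_)⟩ <;>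
        simp only [Nat.succPNat_coe] <;> omega
    · intro i j
      have h₁ : min (i + 1) (i + j + 1) = i + 1 := by omega
      have h₂ : min (i + 1) (2 * (i + j + 1)) = i + 1 := by omega
      have h₃ : i + 1 ≤ i + j + 1 := by omega
      simp only [hf, Nat.succPNat_coe, Nat.succ_eq_add_one, h₁, h₂, h₃, if_true]
      ring
  have mid : HasSum
      (fun p : ℕ+ × ℕ+ => if (p.2 : ℕ) < p.1 ∧ (p.1 : ℕ) < 2 * p.2 then f p else 0)
      ((1 - a ^ 2 * b * c ^ 3)⁻¹ * (1 - a * b * c ^ 2)⁻¹ * (a ^ 3 * b ^ 2 * c ^ 5)) := by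
    refine hasSum_of_injective_of_geometric
      (g := fun q => (Nat.succPNat (2 * q.1 + q.2 + 2), Nat.succPNat (q.1 + q.2 + 1)))
      ?_ ?_ ?_ hv0 hv hu0 hu
    · rintro ⟨i, j⟩ ⟨k, l⟩ h
      simp only [Prod.mk.injEq, Nat.succPNat_inj] at h ⊢
      omega
    · rintro ⟨x, y⟩ h
      have hxy : (y : ℕ) < x ∧ (x : ℕ) < 2 * y := not_not.mp fun hn => h (if_neg hn)
      refine ⟨(x - y - 1, 2 * y - x - 1), Prod.ext (PNat.eq ?_) (PNat.eq ?_)⟩ <;>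
        simp only [Nat.succPNat_coe] <;> omega
    · intro i j
      have h₁ : min (2 * i + j + 2 + 1) (i + j + 1 + 1) = i + j + 2 := by omega
      have h₂ : min (2 * i + j + 2 + 1) (2 * (i + j + 1 + 1)) = 2 * i + j + 3 := by omega
      have h₃ : i + j + 1 + 1 < 2 * i + j + 2 + 1 ∧
          2 * i + j + 2 + 1 < 2 * (i + j + 1 + 1) := by omega
      simp only [hf, Nat.succPNat_coe, Nat.succ_eq_add_one, h₁, h₂, if_pos h₃]
      ring
  have high : HasSum (fun p : ℕ+ × ℕ+ => if 2 * (p.2 : ℕ) ≤ p.1 then f p else 0)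
      ((1 - a ^ 2 * b * c ^ 3)⁻¹ * (1 - a)⁻¹ * (a ^ 2 * b * c ^ 3)) := by
    refine hasSum_of_injective_of_geometric
      (g := fun q => (Nat.succPNat (2 * q.1 + q.2 + 1), Nat.succPNat q.1))
      ?_ ?_ ?_ hv0 hv ha0.le ha1
    · rintro ⟨i, j⟩ ⟨k, l⟩ h
      simp only [Prod.mk.injEq, Nat.succPNat_inj] at h ⊢
      omega
    · rintro ⟨x, y⟩ h
      have hxy : 2 * (y : ℕ) ≤ x := not_not.mp fun hn => h (if_neg hn)
      have hy := y.pos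
      refine ⟨(y - 1, x - 2 * y), Prod.ext (PNat.eq ?_) (PNat.eq ?_)⟩ <;>
        simp only [Nat.succPNat_coe] <;> omega
    · intro i j
      have h₁ : min (2 * i + j + 1 + 1) (i + 1) = i + 1 := by omega
      have h₂ : min (2 * i + j + 1 + 1) (2 * (i + 1)) = 2 * i + 2 := by omega
      have h₃ : 2 * (i + 1) ≤ 2 * i + j + 1 + 1 := by omega
      simp only [hf, Nat.succPNat_coe, Nat.succ_eq_add_one, h₁, h₂, if_pos h₃]
      ring
  convert (low.add mid).add high using 1
  · ext ⟨x, y⟩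
    have hx := x.pos
    have hy := y.pos
    dsimp only
    split_ifs <;> first | omega | ring
  · have h₁ : 1 - a ≠ 0 := by linarith
    have h₂ : 1 - b ≠ 0 := by linarith
    have h₃ : 1 - a * b * c ^ 2 ≠ 0 := by linarith
    have h₄ : 1 - a ^ 2 * b * c ^ 3 ≠ 0 := by linarith
    rw [← one_div, ← one_div, ← one_div, ← one_div, div_mul_div_comm, div_mul_div_comm,
      div_mul_div_comm, div_mul_eq_mul_div, div_mul_eq_mul_div, div_mul_eq_mul_div,
      div_add_div _ _ (by positivity) (by positivity), div_add_div _ _ (by positivity)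
      (by positivity), div_eq_div_iff (by positivity) (by positivity)]
    ring
end

section
/- Let a, b, c be real numbers with 0 < a < 1, 0 < b < 1, c > 0, and a·c < 1. Then the series ∑ a^X · b^Y · c^{min(X,2Y)}, taken over all pairs of positive integers (X,Y) with X > Y, converges and equals a²·b·c²·(1 − a²·b·c) / ((1 − a²·b·c²)·(1 − a)·(1 − a·b·c)). -/
/-- Splits the pairs `X > Y ≥ 1` into those with `2 * Y ≤ X`, parametrized by `(Y - 1, X - 2 * Y)`,
and those with `X < 2 * Y`, parametrized by `(X - Y - 1, 2 * Y - X - 1)`. -/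
def gtPairParam : (ℕ × ℕ) ⊕ (ℕ × ℕ) → {p : ℕ+ × ℕ+ // (p.2 : ℕ) < (p.1 : ℕ)}
  | .inl (m, k) => ⟨(⟨2 * (m + 1) + k, by omega⟩, ⟨m + 1, by omega⟩), by
      simp only [PNat.mk_coe]; omega⟩
  | .inr (i, j) => ⟨(⟨2 * i + j + 3, by omega⟩, ⟨i + j + 2, by omega⟩), by
      simp only [PNat.mk_coe]; omega⟩

theorem gtPair_ext_iff {p q : {p : ℕ+ × ℕ+ // (p.2 : ℕ) < (p.1 : ℕ)}} :
    p = q ↔ (p.1.1 : ℕ) = q.1.1 ∧ (p.1.2 : ℕ) = q.1.2 := by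
  rw [Subtype.ext_iff, Prod.ext_iff, PNat.coe_inj, PNat.coe_inj]

theorem gtPairParam_bijective : Function.Bijective gtPairParam := by
  constructor
  · rintro (⟨m, k⟩ | ⟨m, k⟩) (⟨m', k'⟩ | ⟨m', k'⟩) h <;>
      simp only [gtPairParam, gtPair_ext_iff, PNat.mk_coe] at h <;>
      simp only [Sum.inl.injEq, Sum.inr.injEq, Prod.mk.injEq, reduceCtorEq] <;> omega
  · rintro ⟨⟨X, Y⟩, h⟩
    have hY := Y.pos
    simp only at h
    rcases le_or_gt (2 * (Y : ℕ)) X with hXY | hXY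
    · refine ⟨.inl (Y - 1, X - 2 * Y), ?_⟩
      simp only [gtPairParam, gtPair_ext_iff, PNat.mk_coe]
      omega
    · refine ⟨.inr (X - Y - 1, 2 * Y - X - 1), ?_⟩
      simp only [gtPairParam, gtPair_ext_iff, PNat.mk_coe]
      omega

theorem hasSum_mul_geometric_prod {x y : ℝ} (C : ℝ) (hx0 : 0 ≤ x) (hx1 : x < 1)
    (hy0 : 0 ≤ y) (hy1 : y < 1) :
    HasSum (fun p : ℕ × ℕ => C * (x ^ p.1 * y ^ p.2)) (C * ((1 - x)⁻¹ * (1 - y)⁻¹)) := by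
  have hx := hasSum_geometric_of_lt_one hx0 hx1
  have hy := hasSum_geometric_of_lt_one hy0 hy1
  exact (hx.mul hy (hx.summable.mul_of_nonneg hy.summable (fun n => pow_nonneg hx0 n)
    (fun n => pow_nonneg hy0 n))).mul_left C

/-- The part of Lemma 2.3(2) with X > Y:
    ∑_{X>Y≥1} a^X b^Y c^{min(X,2Y)} = a²bc²(1-a²bc)/((1-a²bc²)(1-a)(1-abc)). -/
theorem heisenberg_sum_min_X_2Y_X_gt_Y (a b c : ℝ) (ha0 : 0 < a) (ha1 : a < 1)
    (hb0 : 0 < b) (hb1 : b < 1) (hc : 0 < c) (hac : a * c < 1) :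
    HasSum
      (fun p : {p : ℕ+ × ℕ+ // (p.2 : ℕ) < (p.1 : ℕ)} =>
        a ^ (p.1.1 : ℕ) * b ^ (p.1.2 : ℕ) * c ^ min (p.1.1 : ℕ) (2 * (p.1.2 : ℕ)))
      (a ^ 2 * b * c ^ 2 * (1 - a ^ 2 * b * c) /
        ((1 - a ^ 2 * b * c ^ 2) * (1 - a) * (1 - a * b * c))) := by
  have hac0 : 0 < a * c := mul_pos ha0 hc
  have hr1 : a * b * c < 1 := by nlinarith
  have hq1 : a ^ 2 * b * c ^ 2 < 1 := by
    have : a ^ 2 * b * c ^ 2 = (a * c) * (a * b * c) := by ring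
    nlinarith
  have hq0 : 0 ≤ a ^ 2 * b * c ^ 2 := by positivity
  have hr0 : 0 ≤ a * b * c := by positivity
  have hfar := hasSum_mul_geometric_prod (a ^ 2 * b * c ^ 2) hq0 hq1 ha0.le ha1
  have hnear := hasSum_mul_geometric_prod (a ^ 3 * b ^ 2 * c ^ 3) hq0 hq1 hr0 hr1
  rw [← (Equiv.ofBijective _ gtPairParam_bijective).hasSum_iff]
  have hval : a ^ 2 * b * c ^ 2 * (1 - a ^ 2 * b * c) /
        ((1 - a ^ 2 * b * c ^ 2) * (1 - a) * (1 - a * b * c)) =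
      a ^ 2 * b * c ^ 2 * ((1 - a ^ 2 * b * c ^ 2)⁻¹ * (1 - a)⁻¹) +
        a ^ 3 * b ^ 2 * c ^ 3 * ((1 - a ^ 2 * b * c ^ 2)⁻¹ * (1 - a * b * c)⁻¹) := by
    have h₁ : 1 - a ^ 2 * b * c ^ 2 ≠ 0 := by linarith
    have h₂ : 1 - a ≠ 0 := by linarith
    have h₃ : 1 - a * b * c ≠ 0 := by linarith
    field_simp
    ring
  rw [hval]
  refine HasSum.sum ?_ ?_
  · convert hfar using 1
    funext ⟨m, k⟩
    have hmin : min (2 * (m + 1) + k) (2 * (m + 1)) = 2 * (m + 1) := by omega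
    simp only [Function.comp_apply, Equiv.ofBijective_apply, gtPairParam, PNat.mk_coe, hmin]
    ring
  · convert hnear using 1
    funext ⟨i, j⟩
    have hmin : min (2 * i + j + 3) (2 * (i + j + 2)) = 2 * i + j + 3 := by omega
    simp only [Function.comp_apply, Equiv.ofBijective_apply, gtPairParam, PNat.mk_coe, hmin]
    ring
end

section
/- Let a, b, c be real numbers with 0 < a < 1, 0 < b < 1, c > 0, and a·c² < 1. Then the series ∑ a^X · b^Y · c^{min(X,Y) + min(X,2Y)}, taken over all pairs of positive integers (X,Y) with X > Y, converges and equals a²·b·c³·(1 − a²·b·c²) / ((1 − a²·b·c³)·(1 − a)·(1 − a·b·c²)). -/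
/-- A product of two convergent geometric series, as a sum over pairs of exponents. -/
theorem hasSum_geometric_mul_geometric {x y : ℝ} (hx0 : 0 ≤ x) (hx1 : x < 1)
    (hy0 : 0 ≤ y) (hy1 : y < 1) :
    HasSum (fun q : ℕ × ℕ => x ^ q.1 * y ^ q.2) ((1 - x)⁻¹ * (1 - y)⁻¹) :=
  (hasSum_geometric_of_lt_one hx0 hx1).mul (hasSum_geometric_of_lt_one hy0 hy1)
    ((summable_geometric_of_lt_one hx0 hx1).mul_of_nonneg
      (summable_geometric_of_lt_one hy0 hy1) (fun _ => by positivity) (fun _ => by positivity))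

/-- The pairs `Y < X` of positive integers, split into those with `2 * Y ≤ X`, parametrized by
`(Y, X) = (i + 1, 2 * (i + 1) + j)`, and those with `X < 2 * Y`, parametrized by
`(Y, X) = (i + j + 2, i + 2 * j + 3)`. -/
def pairsOfLt :
    (ℕ × ℕ) ⊕ (ℕ × ℕ) → {p : ℕ+ × ℕ+ // (p.2 : ℕ) < (p.1 : ℕ)}
  | .inl (i, j) => ⟨(⟨2 * (i + 1) + j, by omega⟩, ⟨i + 1, by omega⟩), by
      simp only [PNat.mk_coe]; omega⟩
  | .inr (i, j) => ⟨(⟨i + 2 * j + 3, by omega⟩, ⟨i + j + 2, by omega⟩), by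
      simp only [PNat.mk_coe]; omega⟩

theorem pairsOfLt_bijective : Function.Bijective pairsOfLt := by
  constructor
  · rintro (⟨i, j⟩ | ⟨i, j⟩) (⟨k, l⟩ | ⟨k, l⟩) h <;>
      have h₁ := congrArg (fun p => (p.1.1 : ℕ)) h <;>
      have h₂ := congrArg (fun p => (p.1.2 : ℕ)) h <;>
      simp only [pairsOfLt, PNat.mk_coe] at h₁ h₂ <;>
      simp only [Sum.inl.injEq, Sum.inr.injEq, Prod.mk.injEq, reduceCtorEq] <;>
      omega
  · rintro ⟨⟨⟨X, hX⟩, ⟨Y, hY⟩⟩, h⟩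
    simp only [PNat.mk_coe] at h
    by_cases hXY : 2 * Y ≤ X
    · refine ⟨.inl (Y - 1, X - 2 * Y), Subtype.ext (Prod.ext (PNat.eq ?_) (PNat.eq ?_))⟩ <;>
        simp only [pairsOfLt, PNat.mk_coe] <;> omega
    · refine ⟨.inr (2 * Y - X - 1, X - Y - 1),
        Subtype.ext (Prod.ext (PNat.eq ?_) (PNat.eq ?_))⟩ <;>
        simp only [pairsOfLt, PNat.mk_coe] <;> omega

/-- The part of Lemma 2.3(3) with X > Y:
    ∑_{X>Y≥1} a^X b^Y c^{min(X,Y)+min(X,2Y)}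
    = a²bc³(1-a²bc²)/((1-a²bc³)(1-a)(1-abc²)). -/
theorem heisenberg_sum_min_XY_plus_min_X_2Y_X_gt_Y (a b c : ℝ) (ha0 : 0 < a)
    (ha1 : a < 1) (hb0 : 0 < b) (hb1 : b < 1) (hc : 0 < c) (hac : a * c ^ 2 < 1) :
    HasSum
      (fun p : {p : ℕ+ × ℕ+ // (p.2 : ℕ) < (p.1 : ℕ)} =>
        a ^ (p.1.1 : ℕ) * b ^ (p.1.2 : ℕ) *
          c ^ (min (p.1.1 : ℕ) (p.1.2 : ℕ) + min (p.1.1 : ℕ) (2 * (p.1.2 : ℕ))))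
      (a ^ 2 * b * c ^ 3 * (1 - a ^ 2 * b * c ^ 2) /
        ((1 - a ^ 2 * b * c ^ 3) * (1 - a) * (1 - a * b * c ^ 2))) := by
  have hx : a * b * c ^ 2 < 1 := by
    calc a * b * c ^ 2 = (a * c ^ 2) * b := by ring
      _ < 1 := mul_lt_one_of_nonneg_of_lt_one_left (by positivity) hac hb1.le
  have hac3 : a ^ 2 * c ^ 3 < 1 := by
    rcases le_total c 1 with h | h
    · calc a ^ 2 * c ^ 3 ≤ a ^ 2 * 1 := by gcongr; exact pow_le_one₀ hc.le h
        _ < 1 := by rw [mul_one]; exact pow_lt_one₀ ha0.le ha1 two_ne_zero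
    · calc a ^ 2 * c ^ 3 ≤ a ^ 2 * c ^ 4 := by gcongr; norm_num
        _ = (a * c ^ 2) ^ 2 := by ring
        _ < 1 := pow_lt_one₀ (by positivity) hac two_ne_zero
  have hy : a ^ 2 * b * c ^ 3 < 1 := by
    calc a ^ 2 * b * c ^ 3 = (a ^ 2 * c ^ 3) * b := by ring
      _ < 1 := mul_lt_one_of_nonneg_of_lt_one_left (by positivity) hac3 hb1.le
  have hfar := (hasSum_geometric_mul_geometric (x := a ^ 2 * b * c ^ 3) (by positivity) hy
    ha0.le ha1).mul_left (a ^ 2 * b * c ^ 3)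
  have hnear := (hasSum_geometric_mul_geometric (x := a * b * c ^ 2) (y := a ^ 2 * b * c ^ 3)
    (by positivity) hx (by positivity) hy).mul_left (a ^ 3 * b ^ 2 * c ^ 5)
  rw [← (Equiv.ofBijective _ pairsOfLt_bijective).hasSum_iff]
  have hsum : a ^ 2 * b * c ^ 3 * (1 - a ^ 2 * b * c ^ 2) /
        ((1 - a ^ 2 * b * c ^ 3) * (1 - a) * (1 - a * b * c ^ 2)) =
      a ^ 2 * b * c ^ 3 * ((1 - a ^ 2 * b * c ^ 3)⁻¹ * (1 - a)⁻¹) +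
        a ^ 3 * b ^ 2 * c ^ 5 * ((1 - a * b * c ^ 2)⁻¹ * (1 - a ^ 2 * b * c ^ 3)⁻¹) := by
    have h₁ : 1 - a ≠ 0 := by linarith
    have h₂ : 1 - a * b * c ^ 2 ≠ 0 := by linarith
    have h₃ : 1 - a ^ 2 * b * c ^ 3 ≠ 0 := by linarith
    field_simp
    ring
  rw [hsum]
  refine HasSum.sum ?_ ?_
  · refine hfar.congr_fun ?_
    rintro ⟨i, j⟩
    simp only [Function.comp_apply, Equiv.ofBijective_apply, pairsOfLt, PNat.mk_coe]
    rw [min_eq_right (by omega), min_eq_right (by omega)]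
    ring
  · refine hnear.congr_fun ?_
    rintro ⟨i, j⟩
    simp only [Function.comp_apply, Equiv.ofBijective_apply, pairsOfLt, PNat.mk_coe]
    rw [min_eq_right (by omega), min_eq_left (by omega)]
    ring
end

section
/- Let q and t be real numbers with q > 1, t > 0, and q³·t² < 1. Then the double series ∑_{X≥1} ∑_{Y≥1} q^{3X + 2Y} · t^{3X + 2Y − min(X, 2Y)} converges and equals q⁵·t⁴·(1 − q³·t³ + q³·t² − q⁸·t⁷) / ((1 − q²·t²)·(1 − q³·t³)·(1 − q⁸·t⁶)). -/
/-- Parametrization of the pairs `(X, Y)` of positive integers by the three families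
`(2m + 3 + k, m + 1)`, `(2m + 2, m + k + 1)` and `(2m + 1, m + k + 1)`. -/
def pnatPairParam : (ℕ × ℕ) ⊕ ((ℕ × ℕ) ⊕ (ℕ × ℕ)) → ℕ+ × ℕ+
  | Sum.inl (m, k) => (Nat.succPNat (2 * m + k + 2), Nat.succPNat m)
  | Sum.inr (Sum.inl (m, k)) => (Nat.succPNat (2 * m + 1), Nat.succPNat (m + k))
  | Sum.inr (Sum.inr (m, k)) => (Nat.succPNat (2 * m), Nat.succPNat (m + k))

theorem pnatPairParam_bijective : Function.Bijective pnatPairParam := by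
  constructor
  · rintro (⟨a, b⟩ | ⟨a, b⟩ | ⟨a, b⟩) (⟨c, d⟩ | ⟨c, d⟩ | ⟨c, d⟩) h <;>
      simp only [pnatPairParam, Prod.mk.injEq, Nat.succPNat_inj, Sum.inl.injEq,
        Sum.inr.injEq, reduceCtorEq] at h ⊢ <;>
      omega
  · rintro ⟨x, y⟩
    obtain ⟨x, rfl⟩ : ∃ n, Nat.succPNat n = x := ⟨_, PNat.succPNat_natPred x⟩
    obtain ⟨y, rfl⟩ : ∃ n, Nat.succPNat n = y := ⟨_, PNat.succPNat_natPred y⟩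
    rcases lt_or_ge (2 * y + 1) x with h | h
    · refine ⟨Sum.inl (y, x - 2 * y - 2), ?_⟩
      exact Prod.ext (congrArg Nat.succPNat (by omega)) (congrArg Nat.succPNat (by omega))
    · rcases Nat.even_or_odd' x with ⟨m, rfl | rfl⟩
      · refine ⟨Sum.inr (Sum.inr (m, y - m)), ?_⟩
        exact Prod.ext (congrArg Nat.succPNat (by omega)) (congrArg Nat.succPNat (by omega))
      · refine ⟨Sum.inr (Sum.inl (m, y - m)), ?_⟩
        exact Prod.ext (congrArg Nat.succPNat (by omega)) (congrArg Nat.succPNat (by omega))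

theorem hasSum_const_mul_geometric_prod {x y : ℝ} (c : ℝ) (hx₀ : 0 ≤ x) (hx : x < 1)
    (hy₀ : 0 ≤ y) (hy : y < 1) :
    HasSum (fun p : ℕ × ℕ => c * (x ^ p.1 * y ^ p.2)) (c * ((1 - x)⁻¹ * (1 - y)⁻¹)) := by
  have hX := hasSum_geometric_of_lt_one hx₀ hx
  have hY := hasSum_geometric_of_lt_one hy₀ hy
  exact (hX.mul hY (hX.summable.mul_of_nonneg hY.summable
    (fun n => pow_nonneg hx₀ n) (fun n => pow_nonneg hy₀ n))).mul_left c


/-- The computation of I₂ in Lemma 2.4: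
    ∑_{X,Y≥1} q^{3X+2Y} t^{3X+2Y-min(X,2Y)}
    = q⁵t⁴(1-q³t³+q³t²-q⁸t⁷)/((1-q²t²)(1-q³t³)(1-q⁸t⁶)). -/
theorem heisenberg_integral_I2 (q t : ℝ) (hq : 1 < q) (ht : 0 < t)
    (hqt : q ^ 3 * t ^ 2 < 1) :
    HasSum
      (fun p : ℕ+ × ℕ+ =>
        q ^ (3 * ((p.1 : ℕ) : ℤ) + 2 * ((p.2 : ℕ) : ℤ)) *
          t ^ (3 * ((p.1 : ℕ) : ℤ) + 2 * ((p.2 : ℕ) : ℤ) -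
            min ((p.1 : ℕ) : ℤ) (2 * ((p.2 : ℕ) : ℤ))))
      (q ^ 5 * t ^ 4 * (1 - q ^ 3 * t ^ 3 + q ^ 3 * t ^ 2 - q ^ 8 * t ^ 7) /
        ((1 - q ^ 2 * t ^ 2) * (1 - q ^ 3 * t ^ 3) * (1 - q ^ 8 * t ^ 6))) := by
  have hq₀ : 0 < q := by linarith
  have ht₁ : t < 1 := by
    by_contra! h
    have := mul_le_mul (one_le_pow₀ hq.le (n := 3)) (one_le_pow₀ h (n := 2)) zero_le_one
      (by positivity)
    linarith
  have hb : q ^ 2 * t ^ 2 < 1 := by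
    refine lt_of_le_of_lt ?_ hqt
    gcongr
    · exact hq.le
    · norm_num
  have hc : q ^ 3 * t ^ 3 < 1 := by
    refine lt_of_le_of_lt ?_ hqt
    exact mul_le_mul_of_nonneg_left (pow_le_pow_of_le_one ht.le ht₁.le (by norm_num))
      (by positivity)
  have hd : q ^ 8 * t ^ 6 < 1 := by
    have h : q ^ 8 * t ^ 6 = (q ^ 3 * t ^ 2) ^ 2 * (q ^ 2 * t ^ 2) := by ring
    rw [h]
    exact mul_lt_one_of_nonneg_of_lt_one_left (by positivity)
      (pow_lt_one₀ (by positivity) hqt (by norm_num)) hb.le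
  have zpow_term (x y : ℤ) (e f : ℕ) (he : 3 * x + 2 * y = e)
      (hf : 3 * x + 2 * y - min x (2 * y) = f) :
      q ^ (3 * x + 2 * y) * t ^ (3 * x + 2 * y - min x (2 * y)) = q ^ e * t ^ f := by
    rw [hf, he, zpow_natCast, zpow_natCast]
  rw [← (Equiv.ofBijective _ pnatPairParam_bijective).hasSum_iff]
  have h₁ := hasSum_const_mul_geometric_prod (q ^ 11 * t ^ 9) (by positivity) hd
    (by positivity) hc
  have h₂ := hasSum_const_mul_geometric_prod (q ^ 8 * t ^ 6) (by positivity) hd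
    (by positivity) hb
  have h₃ := hasSum_const_mul_geometric_prod (q ^ 5 * t ^ 4) (by positivity) hd
    (by positivity) hb
  have hsum : q ^ 5 * t ^ 4 * (1 - q ^ 3 * t ^ 3 + q ^ 3 * t ^ 2 - q ^ 8 * t ^ 7) /
        ((1 - q ^ 2 * t ^ 2) * (1 - q ^ 3 * t ^ 3) * (1 - q ^ 8 * t ^ 6)) =
      q ^ 11 * t ^ 9 * ((1 - q ^ 8 * t ^ 6)⁻¹ * (1 - q ^ 3 * t ^ 3)⁻¹) +
        (q ^ 8 * t ^ 6 * ((1 - q ^ 8 * t ^ 6)⁻¹ * (1 - q ^ 2 * t ^ 2)⁻¹) +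
          q ^ 5 * t ^ 4 * ((1 - q ^ 8 * t ^ 6)⁻¹ * (1 - q ^ 2 * t ^ 2)⁻¹)) := by
    have hb' := (sub_pos.2 hb).ne'
    have hc' := (sub_pos.2 hc).ne'
    have hd' := (sub_pos.2 hd).ne'
    generalize hB : 1 - q ^ 2 * t ^ 2 = B at *
    generalize hC : 1 - q ^ 3 * t ^ 3 = C at *
    generalize 1 - q ^ 8 * t ^ 6 = D at *
    field_simp
    rw [← hB, ← hC]
    ring
  rw [hsum]
  refine HasSum.sum (h₁.congr_fun ?_) (HasSum.sum (h₂.congr_fun ?_) (h₃.congr_fun ?_))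
  · rintro ⟨m, k⟩
    simp only [Function.comp_apply, Equiv.ofBijective_apply, pnatPairParam, Nat.succPNat_coe]
    rw [zpow_term _ _ (8 * m + 3 * k + 11) (6 * m + 3 * k + 9) (by lia) (by lia)]
    ring
  · rintro ⟨m, k⟩
    simp only [Function.comp_apply, Equiv.ofBijective_apply, pnatPairParam, Nat.succPNat_coe]
    rw [zpow_term _ _ (8 * m + 2 * k + 8) (6 * m + 2 * k + 6) (by lia) (by lia)]
    ring
  · rintro ⟨m, k⟩
    simp only [Function.comp_apply, Equiv.ofBijective_apply, pnatPairParam, Nat.succPNat_coe]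
    rw [zpow_term _ _ (8 * m + 2 * k + 5) (6 * m + 2 * k + 4) (by lia) (by lia)]
    ring
end

section
/- Let q and t be real numbers with q > 1, t > 0, and q³·t < 1. Then the double series ∑_{X≥1} ∑_{Y≥1} q^{3X − 2Y} · t^{3X − min(X,Y) − min(X,2Y)} converges and satisfies q⁻¹·(1 − q⁻¹)³ · ∑_{X≥1} ∑_{Y≥1} q^{3X − 2Y} · t^{3X − min(X,Y) − min(X,2Y)} = (1 − q⁻¹)³ · t·(1 − q³·t³ + q³·t² − q·t² − q⁴·t³ + q⁵·t⁶) / ((1 − q⁻²)·(1 − q·t)·(1 − q³·t³)·(1 − q⁴·t³)). -/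
/-- The sum of a two-variable geometric series. -/
lemma hasSum_geometric_prod {x y : ℝ} (hx : 0 ≤ x) (hx' : x < 1) (hy : 0 ≤ y) (hy' : y < 1)
    (c : ℝ) :
    HasSum (fun p : ℕ × ℕ => c * (x ^ p.1 * y ^ p.2)) (c * ((1 - x)⁻¹ * (1 - y)⁻¹)) := by
  have hX := hasSum_geometric_of_lt_one hx hx'
  have hY := hasSum_geometric_of_lt_one hy hy'
  exact (hX.mul hY (hX.summable.mul_of_nonneg hY.summable
    (fun n => pow_nonneg hx n) (fun n => pow_nonneg hy n))).mul_left c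

/-- Parametrization of the cone `X ≤ Y`. -/
def lowerCone (p : ℕ × ℕ) : ℕ+ × ℕ+ :=
  (⟨p.1 + 1, by omega⟩, ⟨p.1 + 1 + p.2, by omega⟩)

/-- Parametrization of the cone `Y < X ≤ 2 * Y`. -/
def middleCone (p : ℕ × ℕ) : ℕ+ × ℕ+ :=
  (⟨2 * (p.1 + 1) + p.2, by omega⟩, ⟨p.1 + 1 + p.2, by omega⟩)

/-- Parametrization of the cone `2 * Y < X`. -/
def upperCone (p : ℕ × ℕ) : ℕ+ × ℕ+ :=
  (⟨2 * (p.1 + 1) + (p.2 + 1), by omega⟩, ⟨p.1 + 1, by omega⟩)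

/-- The three cones partition the positive quadrant. -/
lemma cones_bijective :
    Function.Bijective (Sum.elim lowerCone (Sum.elim middleCone upperCone)) := by
  constructor
  · rintro (⟨a, b⟩ | ⟨a, b⟩ | ⟨a, b⟩) (⟨c, d⟩ | ⟨c, d⟩ | ⟨c, d⟩) h <;>
      have h₁ := congrArg (fun p : ℕ+ × ℕ+ => (p.1 : ℕ)) h <;>
      have h₂ := congrArg (fun p : ℕ+ × ℕ+ => (p.2 : ℕ)) h <;>
      simp only [Sum.elim_inl, Sum.elim_inr, lowerCone, middleCone, upperCone, PNat.mk_coe,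
        Sum.inl.injEq, Sum.inr.injEq, Prod.mk.injEq, reduceCtorEq] at h₁ h₂ ⊢ <;>
      omega
  · rintro ⟨⟨X, hX⟩, ⟨Y, hY⟩⟩
    rcases le_or_gt X Y with h | h
    · refine ⟨Sum.inl (X - 1, Y - X), Prod.ext (PNat.eq ?_) (PNat.eq ?_)⟩ <;>
        simp only [Sum.elim_inl, lowerCone, PNat.mk_coe] <;> omega
    rcases le_or_gt X (2 * Y) with h' | h'
    · refine ⟨Sum.inr (Sum.inl (X - Y - 1, 2 * Y - X)),
        Prod.ext (PNat.eq ?_) (PNat.eq ?_)⟩ <;>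
        simp only [Sum.elim_inl, Sum.elim_inr, middleCone, PNat.mk_coe] <;> omega
    · refine ⟨Sum.inr (Sum.inr (Y - 1, X - 2 * Y - 1)),
        Prod.ext (PNat.eq ?_) (PNat.eq ?_)⟩ <;>
        simp only [Sum.elim_inr, upperCone, PNat.mk_coe] <;> omega

/-- A series over the positive quadrant may be summed cone by cone. -/
lemma hasSum_of_cones {f : ℕ+ × ℕ+ → ℝ} {a b c : ℝ} (ha : HasSum (f ∘ lowerCone) a)
    (hb : HasSum (f ∘ middleCone) b) (hc : HasSum (f ∘ upperCone) c) :
    HasSum f (a + (b + c)) :=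
  (Equiv.ofBijective _ cones_bijective).hasSum_iff.mp (HasSum.sum ha (HasSum.sum hb hc))

/-- The computation of 𝒵₃₁:
    q⁻¹(1-q⁻¹)³·∑_{X,Y≥1} q^{3X-2Y} t^{3X-min(X,Y)-min(X,2Y)}
    = (1-q⁻¹)³·t(1-q³t³+q³t²-qt²-q⁴t³+q⁵t⁶)/((1-q⁻²)(1-qt)(1-q³t³)(1-q⁴t³)). -/
theorem heisenberg_Z31 (q t : ℝ) (hq : 1 < q) (ht : 0 < t) (hqt : q ^ 3 * t < 1) :
    ∃ S : ℝ,
      HasSum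
        (fun p : ℕ+ × ℕ+ =>
          q ^ (3 * ((p.1 : ℕ) : ℤ) - 2 * ((p.2 : ℕ) : ℤ)) *
            t ^ (3 * ((p.1 : ℕ) : ℤ) - min ((p.1 : ℕ) : ℤ) ((p.2 : ℕ) : ℤ) -
              min ((p.1 : ℕ) : ℤ) (2 * ((p.2 : ℕ) : ℤ))))
        S ∧
      q⁻¹ * (1 - q⁻¹) ^ 3 * S =
        (1 - q⁻¹) ^ 3 *
          (t * (1 - q ^ 3 * t ^ 3 + q ^ 3 * t ^ 2 - q * t ^ 2 - q ^ 4 * t ^ 3 +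
              q ^ 5 * t ^ 6) /
            ((1 - q⁻¹ ^ 2) * (1 - q * t) * (1 - q ^ 3 * t ^ 3) *
              (1 - q ^ 4 * t ^ 3))) := by
  have hq0 : 0 < q := by linarith
  have hq3 : 1 < q ^ 3 := one_lt_pow₀ hq (by norm_num)
  have hx : q * t < 1 := 
    (mul_le_mul_of_nonneg_right (le_self_pow₀ hq.le (by norm_num)) ht.le).trans_lt hqt
  have ht1 : t < 1 := by nlinarith
  have hy : q ^ 3 * t ^ 3 < 1 := by
    rw [← mul_pow]; exact pow_lt_one₀ (by positivity) hx (by norm_num)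
  have hz : q ^ 4 * t ^ 3 < 1 := by
    calc q ^ 4 * t ^ 3 = (q ^ 3 * t) * (q * t) * t := by ring
      _ < 1 := mul_lt_one_of_nonneg_of_lt_one_left (by positivity)
          (mul_lt_one_of_nonneg_of_lt_one_left (by positivity) hqt hx.le) ht1.le
  have hw : (q ^ 2)⁻¹ < 1 := inv_lt_one_of_one_lt₀ (one_lt_pow₀ hq (by norm_num))
  refine ⟨_, hasSum_of_cones
    (a := q * t * ((1 - q * t)⁻¹ * (1 - (q ^ 2)⁻¹)⁻¹))
    (b := q ^ 4 * t ^ 3 * ((1 - q ^ 4 * t ^ 3)⁻¹ * (1 - q * t)⁻¹))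
    (c := q ^ 7 * t ^ 6 * ((1 - q ^ 4 * t ^ 3)⁻¹ * (1 - q ^ 3 * t ^ 3)⁻¹)) ?_ ?_ ?_, ?_⟩
  · convert hasSum_geometric_prod (by positivity) hx (by positivity) hw (q * t) using 1
    ext ⟨m, n⟩
    simp only [Function.comp_apply, lowerCone, PNat.mk_coe]
    rw [show 3 * ((m + 1 : ℕ) : ℤ) - 2 * ((m + 1 + n : ℕ) : ℤ) =
        ((m + 1 : ℕ) : ℤ) - ((2 * n : ℕ) : ℤ) by push_cast; ring,
      show 3 * ((m + 1 : ℕ) : ℤ) - min ((m + 1 : ℕ) : ℤ) ((m + 1 + n : ℕ) : ℤ) -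
        min ((m + 1 : ℕ) : ℤ) (2 * ((m + 1 + n : ℕ) : ℤ)) = ((m + 1 : ℕ) : ℤ) by omega,
      zpow_sub₀ hq0.ne', zpow_natCast, zpow_natCast, zpow_natCast, pow_mul, inv_pow,
      div_eq_mul_inv]
    ring
  · convert hasSum_geometric_prod (by positivity) hz (by positivity) hx (q ^ 4 * t ^ 3) using 1
    ext ⟨m, n⟩
    simp only [Function.comp_apply, middleCone, PNat.mk_coe]
    rw [show 3 * ((2 * (m + 1) + n : ℕ) : ℤ) - 2 * ((m + 1 + n : ℕ) : ℤ) =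
        ((4 * (m + 1) + n : ℕ) : ℤ) by push_cast; ring,
      show 3 * ((2 * (m + 1) + n : ℕ) : ℤ) -
          min ((2 * (m + 1) + n : ℕ) : ℤ) ((m + 1 + n : ℕ) : ℤ) -
          min ((2 * (m + 1) + n : ℕ) : ℤ) (2 * ((m + 1 + n : ℕ) : ℤ)) =
        ((3 * (m + 1) + n : ℕ) : ℤ) by omega,
      zpow_natCast, zpow_natCast]
    ring
  · convert hasSum_geometric_prod (by positivity) hz (by positivity) hy (q ^ 7 * t ^ 6) using 1
    ext ⟨m, n⟩
    simp only [Function.comp_apply, upperCone, PNat.mk_coe]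
    rw [show 3 * ((2 * (m + 1) + (n + 1) : ℕ) : ℤ) - 2 * ((m + 1 : ℕ) : ℤ) =
        ((4 * (m + 1) + 3 * (n + 1) : ℕ) : ℤ) by push_cast; ring,
      show 3 * ((2 * (m + 1) + (n + 1) : ℕ) : ℤ) -
          min ((2 * (m + 1) + (n + 1) : ℕ) : ℤ) ((m + 1 : ℕ) : ℤ) -
          min ((2 * (m + 1) + (n + 1) : ℕ) : ℤ) (2 * ((m + 1 : ℕ) : ℤ)) =
        ((3 * (m + 1) + 3 * (n + 1) : ℕ) : ℤ) by omega,
      zpow_natCast, zpow_natCast]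
    ring
  · have h1 : 1 - q * t ≠ 0 := (sub_pos.2 hx).ne'
    have h2 : 1 - q ^ 3 * t ^ 3 ≠ 0 := (sub_pos.2 hy).ne'
    have h3 : 1 - q ^ 4 * t ^ 3 ≠ 0 := (sub_pos.2 hz).ne'
    have h4 : q ^ 2 - 1 ≠ 0 := (sub_pos.2 (one_lt_pow₀ hq (by norm_num))).ne'
    have h5 : 1 - (q ^ 2)⁻¹ = (q ^ 2 - 1) / q ^ 2 := by field_simp
    rw [mul_comm q⁻¹, mul_assoc, inv_pow, h5]
    congr 1
    field_simp
    ring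
end

section
/- Let q and t be real numbers with q > 1, t > 0, and q³·t < 1. Then the triple series ∑_{X≥1} ∑_{Y≥1} ∑_{Z≥1} q^{3X − 3Y − Z} · t^{3X − min(X, 2Y) − min(X, 4Y+3Z)} converges and equals t/((q − 1)·(1 − q⁻³)·(1 − t)) + q²·t²/((1 − q⁻¹)·(1 − t)·(1 − q³·t²)) + q⁵·t⁴/((1 − q⁻¹)·(1 − q³·t²)·(1 − q⁶·t⁴)) + q⁸·t⁶/((1 − q⁻¹)·(1 − q⁹·t⁶)·(1 − q⁶·t⁴)) + q¹¹·t⁸/((1 − q⁻¹)·(1 − q⁹·t⁶)·(1 − q²·t²)) + q¹⁴·t¹⁰/((1 − q⁹·t⁶)·(1 − q⁵·t⁴)·(1 − q²·t²)) + q¹⁷·t¹²/((1 − q⁹·t⁶)·(1 − q⁸·t⁶)·(1 − q⁵·t⁴)) + q²⁰·t¹⁵/((1 − q⁹·t⁶)·(1 − q³·t³)·(1 − q⁸·t⁶)). -/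
theorem hasSum_prod_of_nonneg_of_fiberwise {β γ : Type*} {f : β × γ → ℝ} {g : β → ℝ} {s : ℝ}
    (hf : ∀ p, 0 ≤ f p) (hfg : ∀ b, HasSum (fun c => f (b, c)) (g b)) (hg : HasSum g s) :
    HasSum f s := by
  have hsum : Summable f := by
    refine (summable_prod_of_nonneg hf).2 ⟨fun b => (hfg b).summable, ?_⟩
    simpa only [(hfg _).tsum_eq] using hg.summable
  exact (hsum.hasSum.prod_fiberwise hfg).unique hg ▸ hsum.hasSum

theorem hasSum_pnat_geometric_tail {r : ℝ} (h₀ : 0 ≤ r) (h₁ : r < 1) (m : ℕ) :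
    HasSum (fun n : ℕ+ => if m < (n : ℕ) then r ^ (n : ℕ) else 0) (r ^ (m + 1) / (1 - r)) := by
  have hinj : Function.Injective (fun n : ℕ => (n + m).succPNat) := fun a b hab =>
    Nat.add_right_cancel (Nat.succPNat_injective hab)
  refine (hinj.hasSum_iff ?_).1 ?_
  · intro n hn
    refine if_neg fun hlt => hn ?_
    obtain ⟨k, hk⟩ := Nat.exists_eq_add_of_lt hlt
    exact ⟨k, PNat.eq (by simp only [Nat.succPNat_coe]; omega)⟩
  · have hterm : ((fun n : ℕ+ => if m < (n : ℕ) then r ^ (n : ℕ) else 0) ∘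
        fun n : ℕ => (n + m).succPNat) = fun n => r ^ (m + 1) * r ^ n := by
      funext n
      rw [Function.comp_apply, Nat.succPNat_coe, if_pos (by omega), Nat.succ_eq_add_one]
      ring
    rw [hterm, div_eq_mul_inv]
    exact (hasSum_geometric_of_lt_one h₀ h₁).mul_left (r ^ (m + 1))

theorem hasSum_pnat_prod_geometric {r s : ℝ} (hr₀ : 0 ≤ r) (hr₁ : r < 1) (hs₀ : 0 ≤ s)
    (hs₁ : s < 1) :
    HasSum (fun p : ℕ+ × ℕ+ => r ^ (p.1 : ℕ) * s ^ (p.2 : ℕ)) (r / (1 - r) * (s / (1 - s))) :=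
  hasSum_prod_of_nonneg_of_fiberwise (fun _ => by positivity)
    (fun y => (hasSum_pnat_geometric hs₀ hs₁).mul_left (r ^ (y : ℕ)))
    ((hasSum_pnat_geometric hr₀ hr₁).mul_right _)

/-- The summand, written as a geometric term plus corrections past the two thresholds
`2 * y` and `4 * y + 3 * z` of the minima. -/
theorem zpow_mul_zpow_min_eq {q t : ℝ} (hq : q ≠ 0) (ht : t ≠ 0) (x y z : ℕ) :
    q ^ (3 * (x : ℤ) - 3 * (y : ℤ) - (z : ℤ)) *
        t ^ (3 * (x : ℤ) - min (x : ℤ) (2 * (y : ℤ)) - min (x : ℤ) (4 * (y : ℤ) + 3 * (z : ℤ))) =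
      q⁻¹ ^ (3 * y + z) *
        ((q ^ 3 * t) ^ x +
          (t⁻¹ ^ (2 * y) * (if 2 * y < x then (q ^ 3 * t ^ 2) ^ x else 0) -
            (if 2 * y < x then (q ^ 3 * t) ^ x else 0)) +
          (t⁻¹ ^ (6 * y + 3 * z) * (if 4 * y + 3 * z < x then (q ^ 3 * t ^ 3) ^ x else 0) -
            t⁻¹ ^ (2 * y) * (if 4 * y + 3 * z < x then (q ^ 3 * t ^ 2) ^ x else 0))) := by
  have zpow_natCast_sub {a : ℝ} (ha : a ≠ 0) (m n : ℕ) :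
      a ^ ((m : ℤ) - (n : ℤ)) = a⁻¹ ^ n * a ^ m := by
    rw [zpow_sub₀ ha, zpow_natCast, zpow_natCast, inv_pow, div_eq_inv_mul]
  have hqpow : q ^ (3 * (x : ℤ) - 3 * (y : ℤ) - (z : ℤ)) = q⁻¹ ^ (3 * y + z) * q ^ (3 * x) := by
    rw [← zpow_natCast_sub hq]
    congr 1
    push_cast
    ring
  rw [hqpow, mul_assoc]
  congr 1
  rcases le_or_gt x (2 * y) with hxy | hxy
  · rw [if_neg (by omega), if_neg (by omega), if_neg (by omega), if_neg (by omega),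
      show 3 * (x : ℤ) - min (x : ℤ) (2 * (y : ℤ)) - min (x : ℤ) (4 * (y : ℤ) + 3 * (z : ℤ)) =
        (x : ℤ) by omega, zpow_natCast]
    ring
  rcases le_or_gt x (4 * y + 3 * z) with hxz | hxz
  · rw [if_pos hxy, if_pos hxy, if_neg (by omega), if_neg (by omega),
      show 3 * (x : ℤ) - min (x : ℤ) (2 * (y : ℤ)) - min (x : ℤ) (4 * (y : ℤ) + 3 * (z : ℤ)) =
        ((2 * x : ℕ) : ℤ) - ((2 * y : ℕ) : ℤ) by omega, zpow_natCast_sub ht]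
    ring
  · rw [if_pos hxy, if_pos hxy, if_pos hxz, if_pos hxz,
      show 3 * (x : ℤ) - min (x : ℤ) (2 * (y : ℤ)) - min (x : ℤ) (4 * (y : ℤ) + 3 * (z : ℤ)) =
        ((3 * x : ℕ) : ℤ) - ((6 * y + 3 * z : ℕ) : ℤ) by omega, zpow_natCast_sub ht]
    ring


/-- The series computing 𝒵₃₂₂ᵦ₁:
    ∑_{X,Y,Z≥1} q^{3X-3Y-Z} t^{3X-min(X,2Y)-min(X,4Y+3Z)}. -/
theorem heisenberg_Z322b1 (q t : ℝ) (hq : 1 < q) (ht : 0 < t) (hqt : q ^ 3 * t < 1) :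
    HasSum
      (fun p : ℕ+ × ℕ+ × ℕ+ =>
        q ^ (3 * ((p.1 : ℕ) : ℤ) - 3 * ((p.2.1 : ℕ) : ℤ) - ((p.2.2 : ℕ) : ℤ)) *
          t ^ (3 * ((p.1 : ℕ) : ℤ) -
            min ((p.1 : ℕ) : ℤ) (2 * ((p.2.1 : ℕ) : ℤ)) -
            min ((p.1 : ℕ) : ℤ) (4 * ((p.2.1 : ℕ) : ℤ) + 3 * ((p.2.2 : ℕ) : ℤ))))
      (t / ((q - 1) * (1 - q⁻¹ ^ 3) * (1 - t)) +
        q ^ 2 * t ^ 2 / ((1 - q⁻¹) * (1 - t) * (1 - q ^ 3 * t ^ 2)) +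
        q ^ 5 * t ^ 4 / ((1 - q⁻¹) * (1 - q ^ 3 * t ^ 2) * (1 - q ^ 6 * t ^ 4)) +
        q ^ 8 * t ^ 6 / ((1 - q⁻¹) * (1 - q ^ 9 * t ^ 6) * (1 - q ^ 6 * t ^ 4)) +
        q ^ 11 * t ^ 8 / ((1 - q⁻¹) * (1 - q ^ 9 * t ^ 6) * (1 - q ^ 2 * t ^ 2)) +
        q ^ 14 * t ^ 10 /
          ((1 - q ^ 9 * t ^ 6) * (1 - q ^ 5 * t ^ 4) * (1 - q ^ 2 * t ^ 2)) +
        q ^ 17 * t ^ 12 /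
          ((1 - q ^ 9 * t ^ 6) * (1 - q ^ 8 * t ^ 6) * (1 - q ^ 5 * t ^ 4)) +
        q ^ 20 * t ^ 15 /
          ((1 - q ^ 9 * t ^ 6) * (1 - q ^ 3 * t ^ 3) * (1 - q ^ 8 * t ^ 6))) := by
  have hq₀ : 0 < q := by linarith
  have hq1 : 1 ≤ q := hq.le
  have pow_mul_pow_lt_one (m n : ℕ) (hn : n ≠ 0) (hmn : m ≤ 3 * n) : q ^ m * t ^ n < 1 := by
    calc q ^ m * t ^ n ≤ q ^ (3 * n) * t ^ n := by gcongr
      _ = (q ^ 3 * t) ^ n := by rw [mul_pow, pow_mul]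
      _ < 1 := pow_lt_one₀ (by positivity) hqt hn
  have ht1 : t < 1 := by simpa using pow_mul_pow_lt_one 0 1 one_ne_zero (by norm_num)
  have h22 : q ^ 2 * t ^ 2 < 1 := pow_mul_pow_lt_one 2 2 (by norm_num) (by norm_num)
  have h32 : q ^ 3 * t ^ 2 < 1 := pow_mul_pow_lt_one 3 2 (by norm_num) (by norm_num)
  have h33 : q ^ 3 * t ^ 3 < 1 := pow_mul_pow_lt_one 3 3 (by norm_num) (by norm_num)
  have h54 : q ^ 5 * t ^ 4 < 1 := pow_mul_pow_lt_one 5 4 (by norm_num) (by norm_num)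
  have h64 : q ^ 6 * t ^ 4 < 1 := pow_mul_pow_lt_one 6 4 (by norm_num) (by norm_num)
  have h86 : q ^ 8 * t ^ 6 < 1 := pow_mul_pow_lt_one 8 6 (by norm_num) (by norm_num)
  have h96 : q ^ 9 * t ^ 6 < 1 := pow_mul_pow_lt_one 9 6 (by norm_num) (by norm_num)
  have hqinv : q⁻¹ < 1 := inv_lt_one_of_one_lt₀ hq
  have hqinv3 : q⁻¹ ^ 3 < 1 := pow_lt_one₀ (by positivity) hqinv (by norm_num)
  have hfiber (y z : ℕ) : HasSum (fun x : ℕ+ =>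
      q ^ (3 * ((x : ℕ) : ℤ) - 3 * (y : ℤ) - (z : ℤ)) *
        t ^ (3 * ((x : ℕ) : ℤ) - min ((x : ℕ) : ℤ) (2 * (y : ℤ)) -
          min ((x : ℕ) : ℤ) (4 * (y : ℤ) + 3 * (z : ℤ))))
      (q ^ 3 * t / (1 - q ^ 3 * t) * ((q⁻¹ ^ 3) ^ y * q⁻¹ ^ z) +
        (q ^ 3 * t ^ 2 / (1 - q ^ 3 * t ^ 2) - q ^ 3 * t / (1 - q ^ 3 * t)) *
          ((q ^ 3 * t ^ 2) ^ y * q⁻¹ ^ z) +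
        (q ^ 3 * t ^ 3 / (1 - q ^ 3 * t ^ 3) - q ^ 3 * t ^ 2 / (1 - q ^ 3 * t ^ 2)) *
          ((q ^ 9 * t ^ 6) ^ y * (q ^ 8 * t ^ 6) ^ z)) := by
    simp only [zpow_mul_zpow_min_eq hq₀.ne' ht.ne']
    have hb (m : ℕ) := hasSum_pnat_geometric_tail (r := q ^ 3 * t ^ 2) (by positivity) h32 m
    convert (((hasSum_pnat_geometric (by positivity) hqt).add
      (((hb (2 * y)).mul_left (t⁻¹ ^ (2 * y))).sub
        (hasSum_pnat_geometric_tail (by positivity) hqt (2 * y)))).add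
      (((hasSum_pnat_geometric_tail (by positivity) h33 (4 * y + 3 * z)).mul_left
        (t⁻¹ ^ (6 * y + 3 * z))).sub
          ((hb (4 * y + 3 * z)).mul_left (t⁻¹ ^ (2 * y))))).mul_left (q⁻¹ ^ (3 * y + z)) using 1
    · rfl
    have inv_pow_mul_pow {a : ℝ} (ha : 0 < a) (n : ℕ) : a⁻¹ ^ n * a ^ n = 1 := by
      rw [← mul_pow, inv_mul_cancel₀ ha.ne', one_pow]
    have hy₁ : q⁻¹ ^ (3 * y + z) * (q ^ 3 * t) ^ (2 * y) = (q ^ 3 * t ^ 2) ^ y * q⁻¹ ^ z := by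
      linear_combination (q ^ 3 * t ^ 2) ^ y * q⁻¹ ^ z * inv_pow_mul_pow hq₀ (3 * y)
    have hy₂ : q⁻¹ ^ (3 * y + z) * (t⁻¹ ^ (2 * y) * (q ^ 3 * t ^ 2) ^ (2 * y)) =
        (q ^ 3 * t ^ 2) ^ y * q⁻¹ ^ z := by
      linear_combination hy₁ + q⁻¹ ^ (3 * y + z) * (q ^ 3 * t) ^ (2 * y) *
        inv_pow_mul_pow ht (2 * y)
    have hyz₁ : q⁻¹ ^ (3 * y + z) * (t⁻¹ ^ (2 * y) * (q ^ 3 * t ^ 2) ^ (4 * y + 3 * z)) =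
        (q ^ 9 * t ^ 6) ^ y * (q ^ 8 * t ^ 6) ^ z := by
      linear_combination (q ^ 9 * t ^ 6) ^ y * (q ^ 8 * t ^ 6) ^ z * inv_pow_mul_pow hq₀ (3 * y + z) +
        q⁻¹ ^ (3 * y + z) * q ^ (3 * y + z) * ((q ^ 9 * t ^ 6) ^ y * (q ^ 8 * t ^ 6) ^ z) *
          inv_pow_mul_pow ht (2 * y)
    have hyz₂ : q⁻¹ ^ (3 * y + z) * (t⁻¹ ^ (6 * y + 3 * z) * (q ^ 3 * t ^ 3) ^ (4 * y + 3 * z)) =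
        (q ^ 9 * t ^ 6) ^ y * (q ^ 8 * t ^ 6) ^ z := by
      linear_combination (q ^ 9 * t ^ 6) ^ y * (q ^ 8 * t ^ 6) ^ z * inv_pow_mul_pow hq₀ (3 * y + z) +
        q⁻¹ ^ (3 * y + z) * q ^ (3 * y + z) * ((q ^ 9 * t ^ 6) ^ y * (q ^ 8 * t ^ 6) ^ z) *
          inv_pow_mul_pow ht (6 * y + 3 * z)
    linear_combination q ^ 3 * t * (1 - q ^ 3 * t)⁻¹ * hy₁ -
      q ^ 3 * t ^ 2 * (1 - q ^ 3 * t ^ 2)⁻¹ * hy₂ +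
      q ^ 3 * t ^ 2 * (1 - q ^ 3 * t ^ 2)⁻¹ * hyz₁ -
      q ^ 3 * t ^ 3 * (1 - q ^ 3 * t ^ 3)⁻¹ * hyz₂
  have htotal := (((hasSum_pnat_prod_geometric (r := q⁻¹ ^ 3) (by positivity) hqinv3
      (by positivity) hqinv).mul_left (q ^ 3 * t / (1 - q ^ 3 * t))).add
    ((hasSum_pnat_prod_geometric (r := q ^ 3 * t ^ 2) (by positivity) h32
      (by positivity) hqinv).mul_left
        (q ^ 3 * t ^ 2 / (1 - q ^ 3 * t ^ 2) - q ^ 3 * t / (1 - q ^ 3 * t)))).add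
    ((hasSum_pnat_prod_geometric (by positivity) h96 (by positivity) h86).mul_left
        (q ^ 3 * t ^ 3 / (1 - q ^ 3 * t ^ 3) - q ^ 3 * t ^ 2 / (1 - q ^ 3 * t ^ 2)))
  rw [← (Equiv.prodComm (ℕ+ × ℕ+) ℕ+).hasSum_iff]
  refine hasSum_prod_of_nonneg_of_fiberwise (fun p => ?_) (fun p => hfiber p.1 p.2) ?_
  · simp only [Function.comp_apply]
    positivity
  convert htotal using 1
  · rfl
  have hqt_ne : 1 - q ^ 3 * t ≠ 0 := (sub_pos.2 hqt).ne'
  have ht_ne : 1 - t ≠ 0 := (sub_pos.2 ht1).ne'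
  have h22_ne : 1 - q ^ 2 * t ^ 2 ≠ 0 := (sub_pos.2 h22).ne'
  have h32_ne : 1 - q ^ 3 * t ^ 2 ≠ 0 := (sub_pos.2 h32).ne'
  have h33_ne : 1 - q ^ 3 * t ^ 3 ≠ 0 := (sub_pos.2 h33).ne'
  have h54_ne : 1 - q ^ 5 * t ^ 4 ≠ 0 := (sub_pos.2 h54).ne'
  have h64_ne : 1 - q ^ 6 * t ^ 4 ≠ 0 := (sub_pos.2 h64).ne'
  have h86_ne : 1 - q ^ 8 * t ^ 6 ≠ 0 := (sub_pos.2 h86).ne'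
  have h96_ne : 1 - q ^ 9 * t ^ 6 ≠ 0 := (sub_pos.2 h96).ne'
  have hq_ne : q - 1 ≠ 0 := (sub_pos.2 hq).ne'
  have hq3_ne : q ^ 3 - 1 ≠ 0 :=
    (sub_pos.2 (one_lt_pow₀ hq (by norm_num))).ne'
  have hqinv_eq : 1 - q⁻¹ = (q - 1) / q := by field_simp
  have hqinv3_eq : 1 - q⁻¹ ^ 3 = (q ^ 3 - 1) / q ^ 3 := by field_simp
  symm
  rw [hqinv_eq, hqinv3_eq]
  field_simp
  ring
end

section
/- Let q and t be real numbers with q > 1, t > 0, and q³·t < 1. Then the double series ∑_{X≥1} ∑_{Y≥1} q^{3X − 3Y} · t^{3X − min(X, 2Y) − min(X, 4Y)} converges and equals t/((1 − q⁻³)·(1 − t)) + q³·t²/((1 − t)·(1 − q³·t²)) + q⁶·t⁴/((1 − q⁶·t⁴)·(1 − q³·t²)) + q⁹·t⁶/((1 − q⁹·t⁶)·(1 − q⁶·t⁴)) + q¹²·t⁹/((1 − q³·t³)·(1 − q⁹·t⁶)). -/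
/-- If `g` parametrizes `S` by `ℕ × ℕ` and turns `f` into a double geometric progression,
then `f` is summable on `S`, with the expected sum. -/
theorem hasSum_indicator_of_geometric {α : Type*} {f : α → ℝ} {S : Set α} (g : ℕ × ℕ → α)
    (hg : Function.Injective g) (hS : ∀ p, p ∈ S ↔ ∃ n, g n = p) {c x y : ℝ}
    (hx : 0 ≤ x) (hx1 : x < 1) (hy : 0 ≤ y) (hy1 : y < 1)
    (hf : ∀ a b, f (g (a, b)) = c * (x ^ a * y ^ b)) :
    HasSum (S.indicator f) (c / ((1 - x) * (1 - y))) := by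
  obtain rfl : S = Set.range g := Set.ext hS
  rw [← hasSum_subtype_iff_indicator, div_eq_mul_inv, mul_inv]
  refine hg.hasSum_range_iff.2 ?_
  have hgx := hasSum_geometric_of_lt_one hx hx1
  have hgy := hasSum_geometric_of_lt_one hy hy1
  have h := hgx.mul hgy <| hgx.summable.mul_of_nonneg hgy.summable
    (fun n => pow_nonneg hx n) (fun n => pow_nonneg hy n)
  exact (h.mul_left c).congr_fun fun n => hf n.1 n.2

/-- The summand of the series, as a function of the pair of positive integers. -/
noncomputable def heisenbergTerm (q t : ℝ) (p : ℕ+ × ℕ+) : ℝ :=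
  q ^ (3 * ((p.1 : ℕ) : ℤ) - 3 * ((p.2 : ℕ) : ℤ)) *
    t ^ (3 * ((p.1 : ℕ) : ℤ) -
      min ((p.1 : ℕ) : ℤ) (2 * ((p.2 : ℕ) : ℤ)) -
      min ((p.1 : ℕ) : ℤ) (4 * ((p.2 : ℕ) : ℤ)))

theorem heisenbergTerm_eq {q t : ℝ} {p : ℕ+ × ℕ+} {m n : ℕ}
    (hm : 3 * (p.1 : ℕ) = 3 * (p.2 : ℕ) + m)
    (hn : 3 * (p.1 : ℕ) =
      n + min (p.1 : ℕ) (2 * (p.2 : ℕ)) + min (p.1 : ℕ) (4 * (p.2 : ℕ))) :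
    heisenbergTerm q t p = q ^ m * t ^ n := by
  rw [heisenbergTerm, ← zpow_natCast q, ← zpow_natCast t]
  congr 2 <;> omega

theorem heisenbergTerm_eq_inv {q t : ℝ} {p : ℕ+ × ℕ+} {m : ℕ}
    (hm : (p.2 : ℕ) = (p.1 : ℕ) + m) :
    heisenbergTerm q t p = q⁻¹ ^ (3 * m) * t ^ (p.1 : ℕ) := by
  rw [heisenbergTerm, inv_pow, ← zpow_natCast q, ← zpow_neg, ← zpow_natCast t]
  congr 2 <;> omega

/-- The lattice points of the cone `k * Y < X ≤ (k + 1) * Y`, spanned by `(k, 1)` and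
`(k + 1, 1)`. -/
theorem hasSum_indicator_cone {f : ℕ+ × ℕ+ → ℝ} (k : ℕ) {c x y : ℝ}
    (hx : 0 ≤ x) (hx1 : x < 1) (hy : 0 ≤ y) (hy1 : y < 1)
    (hf : ∀ (p : ℕ+ × ℕ+) (a b : ℕ), (p.1 : ℕ) = k * (a + b + 1) + (b + 1) →
      (p.2 : ℕ) = a + b + 1 → f p = c * (x ^ a * y ^ b)) :
    HasSum ({p : ℕ+ × ℕ+ | k * (p.2 : ℕ) < p.1 ∧ (p.1 : ℕ) ≤ (k + 1) * p.2}.indicator f)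
      (c / ((1 - x) * (1 - y))) := by
  refine hasSum_indicator_of_geometric
    (fun n => (⟨k * (n.1 + n.2 + 1) + (n.2 + 1), by omega⟩, ⟨n.1 + n.2 + 1, by omega⟩))
    ?_ ?_ hx hx1 hy hy1 fun a b => hf _ a b rfl rfl
  · rintro ⟨a, b⟩ ⟨a₂, b₂⟩ h
    obtain ⟨h₁, h₂⟩ := Prod.mk.inj h
    have h₁ := congrArg PNat.val h₁
    have h₂ := congrArg PNat.val h₂
    simp only [PNat.mk_coe] at h₁ h₂
    rw [h₂] at h₁
    ext <;> simp only <;> omega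
  · rintro ⟨⟨X, hX⟩, ⟨Y, hY⟩⟩
    simp only [Set.mem_ofPred_eq, PNat.mk_coe]
    constructor
    · rintro ⟨h₁, h₂⟩
      rw [add_mul] at h₂
      refine ⟨(Y - (X - k * Y), X - k * Y - 1), Prod.ext (PNat.eq ?_) (PNat.eq ?_)⟩ <;>
        simp only [PNat.mk_coe]
      · rw [show Y - (X - k * Y) + (X - k * Y - 1) + 1 = Y by omega]
        omega
      · omega
    · rintro ⟨⟨a, b⟩, h⟩
      obtain ⟨h₁, h₂⟩ := Prod.mk.inj h
      obtain rfl := congrArg PNat.val h₁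
      obtain rfl := congrArg PNat.val h₂
      simp only [PNat.mk_coe]
      rw [add_mul]
      omega

/-- The lattice points of the cone `X ≤ Y`, spanned by `(0, 1)` and `(1, 1)`. -/
theorem hasSum_indicator_le {f : ℕ+ × ℕ+ → ℝ} {c x y : ℝ}
    (hx : 0 ≤ x) (hx1 : x < 1) (hy : 0 ≤ y) (hy1 : y < 1)
    (hf : ∀ (p : ℕ+ × ℕ+) (a b : ℕ), (p.1 : ℕ) = b + 1 → (p.2 : ℕ) = a + b + 1 →
      f p = c * (x ^ a * y ^ b)) :
    HasSum ({p : ℕ+ × ℕ+ | (p.1 : ℕ) ≤ p.2}.indicator f) (c / ((1 - x) * (1 - y))) := by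
  have h := hasSum_indicator_cone 0 hx hx1 hy hy1
    fun p a b h₁ h₂ => hf p a b (by omega) h₂
  convert h using 3
  ext p
  simp

/-- The lattice points of the cone `k * Y < X`, spanned by `(1, 0)` and `(k, 1)`. -/
theorem hasSum_indicator_lt {f : ℕ+ × ℕ+ → ℝ} (k : ℕ) {c x y : ℝ}
    (hx : 0 ≤ x) (hx1 : x < 1) (hy : 0 ≤ y) (hy1 : y < 1)
    (hf : ∀ (p : ℕ+ × ℕ+) (a b : ℕ), (p.1 : ℕ) = k * (b + 1) + (a + 1) →
      (p.2 : ℕ) = b + 1 → f p = c * (x ^ a * y ^ b)) :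
    HasSum ({p : ℕ+ × ℕ+ | k * (p.2 : ℕ) < p.1}.indicator f) (c / ((1 - x) * (1 - y))) := by
  refine hasSum_indicator_of_geometric
    (fun n => (⟨k * (n.2 + 1) + (n.1 + 1), by omega⟩, ⟨n.2 + 1, by omega⟩))
    ?_ ?_ hx hx1 hy hy1 fun a b => hf _ a b rfl rfl
  · rintro ⟨a, b⟩ ⟨a₂, b₂⟩ h
    obtain ⟨h₁, h₂⟩ := Prod.mk.inj h
    have h₁ := congrArg PNat.val h₁
    have h₂ := congrArg PNat.val h₂
    simp only [PNat.mk_coe] at h₁ h₂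
    rw [h₂] at h₁
    ext <;> simp only <;> omega
  · rintro ⟨⟨X, hX⟩, ⟨Y, hY⟩⟩
    simp only [Set.mem_ofPred_eq, PNat.mk_coe]
    constructor
    · intro h
      refine ⟨(X - k * Y - 1, Y - 1), Prod.ext (PNat.eq ?_) (PNat.eq ?_)⟩ <;>
        simp only [PNat.mk_coe, Nat.sub_add_cancel hY]
      omega
    · rintro ⟨⟨a, b⟩, h⟩
      obtain ⟨h₁, h₂⟩ := Prod.mk.inj h
      obtain rfl := congrArg PNat.val h₁
      obtain rfl := congrArg PNat.val h₂
      simp only [PNat.mk_coe]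
      omega

/-- The series computing J₁:
    ∑_{X,Y≥1} q^{3X-3Y} t^{3X-min(X,2Y)-min(X,4Y)}. -/
theorem heisenberg_J1 (q t : ℝ) (hq : 1 < q) (ht : 0 < t) (hqt : q ^ 3 * t < 1) :
    HasSum
      (fun p : ℕ+ × ℕ+ =>
        q ^ (3 * ((p.1 : ℕ) : ℤ) - 3 * ((p.2 : ℕ) : ℤ)) *
          t ^ (3 * ((p.1 : ℕ) : ℤ) -
            min ((p.1 : ℕ) : ℤ) (2 * ((p.2 : ℕ) : ℤ)) -
            min ((p.1 : ℕ) : ℤ) (4 * ((p.2 : ℕ) : ℤ))))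
      (t / ((1 - q⁻¹ ^ 3) * (1 - t)) +
        q ^ 3 * t ^ 2 / ((1 - t) * (1 - q ^ 3 * t ^ 2)) +
        q ^ 6 * t ^ 4 / ((1 - q ^ 6 * t ^ 4) * (1 - q ^ 3 * t ^ 2)) +
        q ^ 9 * t ^ 6 / ((1 - q ^ 9 * t ^ 6) * (1 - q ^ 6 * t ^ 4)) +
        q ^ 12 * t ^ 9 / ((1 - q ^ 3 * t ^ 3) * (1 - q ^ 9 * t ^ 6))) := by
  have hq0 : 0 < q := by linarith
  have hu0 : 0 ≤ q ^ 3 * t := by positivity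
  have ht1 : t < 1 :=
    (le_mul_of_one_le_left ht.le (one_le_pow₀ hq.le)).trans_lt hqt
  have hqi : q⁻¹ ^ 3 < 1 := pow_lt_one₀ (by positivity) (inv_lt_one_of_one_lt₀ hq) (by norm_num)
  have hlt (m n : ℕ) (hm : m ≠ 0) : (q ^ 3 * t) ^ m * t ^ n < 1 :=
    mul_lt_one_of_nonneg_of_lt_one_left (by positivity) (pow_lt_one₀ hu0 hqt hm)
      (pow_le_one₀ ht.le ht1.le)
  have h₁ : q ^ 3 * t ^ 2 < 1 := by convert hlt 1 1 one_ne_zero using 1; ring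
  have h₂ : q ^ 6 * t ^ 4 < 1 := by convert hlt 2 2 two_ne_zero using 1; ring
  have h₃ : q ^ 9 * t ^ 6 < 1 := by convert hlt 3 3 three_ne_zero using 1; ring
  have h₄ : q ^ 3 * t ^ 3 < 1 := by convert hlt 1 2 one_ne_zero using 1; ring
  have s₀ := hasSum_indicator_le (f := heisenbergTerm q t) (c := t)
    (by positivity) hqi ht.le ht1 fun p a b hX hY => by
      rw [heisenbergTerm_eq_inv (m := a) (by omega), hX]
      ring
  have s₁ := hasSum_indicator_cone (f := heisenbergTerm q t) 1 (c := q ^ 3 * t ^ 2)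
    ht.le ht1 (by positivity) h₁ fun p a b hX hY => by
      rw [heisenbergTerm_eq (m := 3 * b + 3) (n := a + 2 * b + 2) (by omega) (by omega)]
      ring
  have s₂ := hasSum_indicator_cone (f := heisenbergTerm q t) 2 (c := q ^ 6 * t ^ 4)
    (by positivity) h₁ (by positivity) h₂ fun p a b hX hY => by
      rw [heisenbergTerm_eq (m := 3 * a + 6 * b + 6) (n := 2 * a + 4 * b + 4)
        (by omega) (by omega)]
      ring
  have s₃ := hasSum_indicator_cone (f := heisenbergTerm q t) 3 (c := q ^ 9 * t ^ 6)
    (by positivity) h₂ (by positivity) h₃ fun p a b hX hY => by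
      rw [heisenbergTerm_eq (m := 6 * a + 9 * b + 9) (n := 4 * a + 6 * b + 6)
        (by omega) (by omega)]
      ring
  have s₄ := hasSum_indicator_lt (f := heisenbergTerm q t) 4 (c := q ^ 12 * t ^ 9)
    (by positivity) h₄ (by positivity) h₃ fun p a b hX hY => by
      rw [heisenbergTerm_eq (m := 3 * a + 9 * b + 12) (n := 3 * a + 6 * b + 9)
        (by omega) (by omega)]
      ring
  rw [mul_comm (1 - q ^ 6 * t ^ 4) (1 - q ^ 3 * t ^ 2),
    mul_comm (1 - q ^ 9 * t ^ 6) (1 - q ^ 6 * t ^ 4)]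
  refine ((((s₀.add s₁).add s₂).add s₃).add s₄).congr_fun fun p => ?_
  change heisenbergTerm q t p = _
  simp only [Set.indicator_apply, Set.mem_ofPred_eq]
  split_ifs <;> first | omega | simp
end
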